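/- Let ρ_BTN be a basic triangle network state and let ρ_UTN = (U_A ⊗ U_B ⊗ U_C) ρ_BTN (U_A ⊗ U_B ⊗ U_C)†, where U_A, U_B, U_C are unitaries on the respective parties' d²-dimensional systems A = A₁A₂, B = B₁B₂, C = C₁C₂. Let each party's observables {A_i}, {B_j}, {C_k} form a complete orthogonal set of observables on C^{d²}. Then there exist real orthogonal d⁴×d⁴ matrices O_A, O_B, O_C such that, with O = O_A ⊕ O_B ⊕ O_C, one has Γ({A_i, B_j, C_k}, ρ_UTN) = Oᵀ Γ({A_i, B_j, C_k}, ρ_BTN) O; in particular Γ({A_i, B_j, C_k}, ρ_UTN) = Oᵀ(T_c + T_b + T_a + R)O, where T_c, T_b, T_a, R are the positive semidefinite matrices of the block decomposition of the covariance matrix of the BTN state ρ_BTN (T_c the covariance matrix of the reduced observables on ρ_c padded with zeros in the Charlie sector, T_b and T_a analogously, and R block-diagonal positive semidefinite). -/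

import Mathlib

open Matrix Kronecker BigOperators
open scoped ComplexOrder

noncomputable section

/-- Covariance matrix of a family of observables `M` in the state `ρ`. -/
def covMat {n ι : Type*} [Fintype n] (M : ι → Matrix n n ℂ) (ρ : Matrix n n ℂ) :
    Matrix ι ι ℂ :=
  Matrix.of fun i j => (M i * M j * ρ).trace - (M i * ρ).trace * (M j * ρ).trace

/-- A density matrix: positive semidefinite with unit trace. -/
def IsDensity {n : Type*} [Fintype n] (ρ : Matrix n n ℂ) : Prop :=
  ρ.PosSemidef ∧ ρ.trace = 1

/-- Partial trace over the first tensor factor. -/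
def ptrace₁ {m n : Type*} [Fintype m] (M : Matrix (m × n) (m × n) ℂ) : Matrix n n ℂ :=
  Matrix.of fun i j => ∑ k, M (k, i) (k, j)

/-- Partial trace over the second tensor factor. -/
def ptrace₂ {m n : Type*} [Fintype n] (M : Matrix (m × n) (m × n) ℂ) : Matrix m m ℂ :=
  Matrix.of fun i j => ∑ k, M (i, k) (j, k)

/-- Index of a two-qudit space. -/
abbrev D2 (d : ℕ) := Fin d × Fin d

/-- Index of the six-factor triangle-network space, ordered C₂, A₁, A₂, B₁, B₂, C₁. -/
abbrev TriIdx (d : ℕ) := D2 d × (D2 d × D2 d)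

/-- The basic triangle network state `ρ_b ⊗ ρ_c ⊗ ρ_a`. -/
def btnState {d : ℕ} (ρa ρb ρc : Matrix (D2 d) (D2 d) ℂ) :
    Matrix (TriIdx d) (TriIdx d) ℂ :=
  ρb ⊗ₖ (ρc ⊗ₖ ρa)

/-- Embed an observable of Alice (acting on A₁A₂) into the global space. -/
def embedA {d : ℕ} (M : Matrix (D2 d) (D2 d) ℂ) : Matrix (TriIdx d) (TriIdx d) ℂ :=
  Matrix.of fun p q =>
    if p.1.1 = q.1.1 ∧ p.2.1.2 = q.2.1.2 ∧ p.2.2 = q.2.2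
    then M (p.1.2, p.2.1.1) (q.1.2, q.2.1.1) else 0

/-- Embed an observable of Bob (acting on B₁B₂) into the global space. -/
def embedB {d : ℕ} (M : Matrix (D2 d) (D2 d) ℂ) : Matrix (TriIdx d) (TriIdx d) ℂ :=
  Matrix.of fun p q =>
    if p.1 = q.1 ∧ p.2.1.1 = q.2.1.1 ∧ p.2.2.2 = q.2.2.2
    then M (p.2.1.2, p.2.2.1) (q.2.1.2, q.2.2.1) else 0

/-- Embed an observable of Charlie (acting on C₁C₂) into the global space. -/
def embedC {d : ℕ} (M : Matrix (D2 d) (D2 d) ℂ) : Matrix (TriIdx d) (TriIdx d) ℂ :=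
  Matrix.of fun p q =>
    if p.1.2 = q.1.2 ∧ p.2.1 = q.2.1 ∧ p.2.2.1 = q.2.2.1
    then M (p.2.2.2, p.1.1) (q.2.2.2, q.1.1) else 0

section marginals
variable {d : ℕ} (ρa ρb ρc : Matrix (D2 d) (D2 d) ℂ)

/-- Marginal of ρ_BTN on A₁ (second factor of ρ_b = ρ^{C₂A₁}). -/
def margA1 : Matrix (Fin d) (Fin d) ℂ := ptrace₁ ρb
/-- Marginal on C₂. -/
def margC2 : Matrix (Fin d) (Fin d) ℂ := ptrace₂ ρb
/-- Marginal on A₂ (first factor of ρ_c = ρ^{A₂B₁}). -/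
def margA2 : Matrix (Fin d) (Fin d) ℂ := ptrace₂ ρc
/-- Marginal on B₁. -/
def margB1 : Matrix (Fin d) (Fin d) ℂ := ptrace₁ ρc
/-- Marginal on B₂ (first factor of ρ_a = ρ^{B₂C₁}). -/
def margB2 : Matrix (Fin d) (Fin d) ℂ := ptrace₂ ρa
/-- Marginal on C₁. -/
def margC1 : Matrix (Fin d) (Fin d) ℂ := ptrace₁ ρa

/-- Reduced observable A^(2) = tr_{A₁}(A (ρ^{A₁} ⊗ 1)). -/
def redA2 (M : Matrix (D2 d) (D2 d) ℂ) : Matrix (Fin d) (Fin d) ℂ :=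
  ptrace₁ (M * (margA1 ρb ⊗ₖ (1 : Matrix (Fin d) (Fin d) ℂ)))
/-- Reduced observable A^(1) = tr_{A₂}(A (1 ⊗ ρ^{A₂})). -/
def redA1 (M : Matrix (D2 d) (D2 d) ℂ) : Matrix (Fin d) (Fin d) ℂ :=
  ptrace₂ (M * ((1 : Matrix (Fin d) (Fin d) ℂ) ⊗ₖ margA2 ρc))
/-- Reduced observable B^(1) = tr_{B₂}(B (1 ⊗ ρ^{B₂})). -/
def redB1 (M : Matrix (D2 d) (D2 d) ℂ) : Matrix (Fin d) (Fin d) ℂ :=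
  ptrace₂ (M * ((1 : Matrix (Fin d) (Fin d) ℂ) ⊗ₖ margB2 ρa))
/-- Reduced observable B^(2) = tr_{B₁}(B (ρ^{B₁} ⊗ 1)). -/
def redB2 (M : Matrix (D2 d) (D2 d) ℂ) : Matrix (Fin d) (Fin d) ℂ :=
  ptrace₁ (M * (margB1 ρc ⊗ₖ (1 : Matrix (Fin d) (Fin d) ℂ)))
/-- Reduced observable C^(1) = tr_{C₂}(C (1 ⊗ ρ^{C₂})); here C acts on C₁C₂. -/
def redC1 (M : Matrix (D2 d) (D2 d) ℂ) : Matrix (Fin d) (Fin d) ℂ :=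
  ptrace₂ (M * ((1 : Matrix (Fin d) (Fin d) ℂ) ⊗ₖ margC2 ρb))
/-- Reduced observable C^(2) = tr_{C₁}(C (ρ^{C₁} ⊗ 1)). -/
def redC2 (M : Matrix (D2 d) (D2 d) ℂ) : Matrix (Fin d) (Fin d) ℂ :=
  ptrace₁ (M * (margC1 ρa ⊗ₖ (1 : Matrix (Fin d) (Fin d) ℂ)))

end marginals


/-
The covariance of two observables is a bilinear form in the observables, so everything reduces to
how an observable of one party sits among the three sources.

In a product state `ρ₁ ⊗ ρ₂` every observable `M` splits, up to a constant, as
`M₁ ⊗ 1 + 1 ⊗ M₂ + N`, where `M₁`, `M₂` are its reduced observables and the interaction part `N` has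
vanishing reductions; the three summands are pairwise uncorrelated. Two different parties share
exactly one source, and their covariance is that of their reduced observables on it. Hence
`Γ(ρ_BTN)` is the sum of the covariance matrices of the reduced observables on the three sources
and a block-diagonal matrix `R` whose blocks are covariance matrices of interaction parts; all of
them are positive semidefinite. A cyclic rotation of the triangle carries Alice's case to Bob's and
Charlie's.

Conjugating the state by `U_A ⊗ U_B ⊗ U_C` amounts to replacing each `A i` by `U_A† A i U_A`, and
likewise for Bob and Charlie. This is again a complete orthogonal set, so it arises from the
original one by a real orthogonal matrix, which bilinearity pulls out of the covariance matrix.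
-/

section Kronecker

variable {m n m' n' R : Type*}

theorem isHermitian_kronecker [CommSemiring R] [StarRing R] {X : Matrix m m R} {Y : Matrix n n R}
    (hX : X.IsHermitian) (hY : Y.IsHermitian) : (X ⊗ₖ Y).IsHermitian := by
  rw [IsHermitian, conjTranspose_kronecker, hX.eq, hY.eq]

variable [CommSemiring R]

theorem commute_kronecker_one_one_kronecker [Fintype m] [Fintype n] [DecidableEq m]
    [DecidableEq n] (X : Matrix m m R) (Y : Matrix n n R) :
    Commute (X ⊗ₖ (1 : Matrix n n R)) ((1 : Matrix m m R) ⊗ₖ Y) := by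
  simp only [Commute, SemiconjBy, ← mul_kronecker_mul, Matrix.one_mul, Matrix.mul_one]

theorem kronecker_induction [Finite m] [Finite n] {P : Matrix (m × n) (m × n) R → Prop} (zero : P 0)
    (add : ∀ M N, P M → P N → P (M + N))
    (kronecker : ∀ (X : Matrix m m R) (Y : Matrix n n R), P (X ⊗ₖ Y))
    (M : Matrix (m × n) (m × n) R) : P M := by
  classical
  cases nonempty_fintype m
  cases nonempty_fintype n
  obtain ⟨t, rfl⟩ := (kroneckerLinearEquiv m m n n R).surjective M
  induction t using TensorProduct.induction_on with
  | zero => simpa only [map_zero] using zero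
  | tmul X Y => simpa only [kroneckerLinearEquiv_tmul] using kronecker X Y
  | add s t hs ht => simpa only [map_add] using add _ _ hs ht

theorem kronecker_induction₂ [Finite m] [Finite n] [Finite m'] [Finite n']
    {P : Matrix (m × n) (m × n) R → Matrix (m' × n') (m' × n') R → Prop}
    (zero_left : ∀ N, P 0 N) (zero_right : ∀ M, P M 0)
    (add_left : ∀ M M' N, P M N → P M' N → P (M + M') N)
    (add_right : ∀ M N N', P M N → P M N' → P M (N + N'))
    (kronecker : ∀ X Y Z W, P (X ⊗ₖ Y) (Z ⊗ₖ W)) (M : Matrix (m × n) (m × n) R)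
    (N : Matrix (m' × n') (m' × n') R) : P M N := by
  induction M using kronecker_induction with
  | zero => exact zero_left N
  | add M M' hM hM' => exact add_left M M' N hM hM'
  | kronecker X Y =>
    induction N using kronecker_induction with
    | zero => exact zero_right _
    | add N N' hN hN' => exact add_right _ N N' hN hN'
    | kronecker Z W => exact kronecker X Y Z W

end Kronecker

section PosSemidef

variable {𝕜 n ι κ : Type*} [RCLike 𝕜]

theorem posSemidef_of_trace_conjTranspose_mul_mul [Fintype n] [Finite ι] {ρ : Matrix n n 𝕜}
    (hρ : ρ.PosSemidef) (N : ι → Matrix n n 𝕜) :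
    (Matrix.of fun i j => ((N i)ᴴ * N j * ρ).trace : Matrix ι ι 𝕜).PosSemidef := by
  classical
  open scoped MatrixOrder in
  obtain ⟨S, rfl⟩ := CStarAlgebra.nonneg_iff_eq_star_mul_self.mp hρ.nonneg
  have gram_eq : (Matrix.of fun i j => ((N i)ᴴ * N j * (Sᴴ * S)).trace : Matrix ι ι 𝕜) =
      (Matrix.of fun p i => vec (N i * Sᴴ) p)ᴴ * Matrix.of fun p i => vec (N i * Sᴴ) p := by
    ext i j
    calc ((N i)ᴴ * N j * (Sᴴ * S)).trace = ((N i * Sᴴ)ᴴ * (N j * Sᴴ)).trace := by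
          rw [conjTranspose_mul, conjTranspose_conjTranspose, ← Matrix.mul_assoc,
            trace_mul_comm _ S]
          simp only [Matrix.mul_assoc]
      _ = _ := (star_vec_dotProduct_vec _ _).symm
  rw [star_eq_conjTranspose, gram_eq]
  exact posSemidef_conjTranspose_mul_self _

theorem posSemidef_fromBlocks_zero [Finite ι] [Finite κ] {P : Matrix ι ι 𝕜} {Q : Matrix κ κ 𝕜}
    (hP : P.PosSemidef) (hQ : Q.PosSemidef) : (fromBlocks P 0 0 Q).PosSemidef := by
  cases nonempty_fintype ι
  cases nonempty_fintype κ
  refine .of_dotProduct_mulVec_nonneg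
    (hP.isHermitian.fromBlocks conjTranspose_zero hQ.isHermitian) fun x => ?_
  rw [← Sum.elim_comp_inl_inr x, Function.star_sumElim, fromBlocks_mulVec,
    sumElim_dotProduct_sumElim, Sum.elim_comp_inl, Sum.elim_comp_inr, zero_mulVec, zero_mulVec,
    add_zero, zero_add]
  exact add_nonneg (hP.dotProduct_mulVec_nonneg _) (hQ.dotProduct_mulVec_nonneg _)

end PosSemidef

section Covariance

variable {m n ι κ : Type*} [Fintype m] [Fintype n]

/-- The covariance `tr (X Y ρ) - tr (X ρ) tr (Y ρ)` as a bilinear form in the pair `(X, Y)` of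
operators; `covMat` is its matrix on a family of observables. -/
def covForm (ρ : Matrix n n ℂ) : Matrix n n ℂ →ₗ[ℂ] Matrix n n ℂ →ₗ[ℂ] ℂ :=
  LinearMap.mk₂ ℂ (fun X Y => (X * Y * ρ).trace - (X * ρ).trace * (Y * ρ).trace)
    (fun X X' Y => by simp only [Matrix.add_mul, trace_add]; ring)
    (fun c X Y => by simp only [Matrix.smul_mul, trace_smul, smul_eq_mul]; ring)
    (fun X Y Y' => by simp only [Matrix.mul_add, Matrix.add_mul, trace_add]; ring)
    (fun c X Y => by simp only [Matrix.mul_smul, Matrix.smul_mul, trace_smul, smul_eq_mul]; ring)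

theorem covForm_apply (ρ X Y : Matrix n n ℂ) :
    covForm ρ X Y = (X * Y * ρ).trace - (X * ρ).trace * (Y * ρ).trace :=
  rfl

theorem covMat_apply (M : ι → Matrix n n ℂ) (ρ : Matrix n n ℂ) (i j : ι) :
    covMat M ρ i j = covForm ρ (M i) (M j) :=
  rfl

theorem covForm_comm_of_commute {X Y : Matrix n n ℂ} (h : Commute X Y) (ρ : Matrix n n ℂ) :
    covForm ρ X Y = covForm ρ Y X := by
  rw [covForm_apply, covForm_apply, h.eq, mul_comm (X * ρ).trace]

theorem trace_submatrix_equiv {R : Type*} [AddCommMonoid R] (M : Matrix n n R) (e : m ≃ n) :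
    (M.submatrix e e).trace = M.trace :=
  e.sum_comp fun i => M i i

theorem covForm_submatrix (ρ X Y : Matrix n n ℂ) (e : m ≃ n) :
    covForm (ρ.submatrix e e) (X.submatrix e e) (Y.submatrix e e) = covForm ρ X Y := by
  simp only [covForm_apply, submatrix_mul_equiv, trace_submatrix_equiv]

theorem covForm_sum_smul_sum_smul [Fintype κ] (ρ : Matrix n n ℂ) (M : κ → Matrix n n ℂ)
    (a b : κ → ℂ) :
    covForm ρ (∑ k, a k • M k) (∑ k, b k • M k) = a ⬝ᵥ covMat M ρ *ᵥ b := by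
  simp only [map_sum, map_smul, LinearMap.sum_apply, LinearMap.smul_apply, smul_eq_mul,
    dotProduct, mulVec, covMat_apply, Finset.mul_sum]
  rw [Finset.sum_comm]
  exact Finset.sum_congr rfl fun k _ => Finset.sum_congr rfl fun l _ => by ring

theorem covMat_sum_smul [Fintype κ] (M : κ → Matrix n n ℂ) (O : Matrix κ ι ℂ)
    (ρ : Matrix n n ℂ) :
    covMat (fun i => ∑ k, O k i • M k) ρ = Oᵀ * covMat M ρ * O := by
  ext i j
  rw [covMat_apply, covForm_sum_smul_sum_smul, Matrix.mul_assoc]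
  rfl

theorem star_trace_mul_of_isHermitian {X ρ : Matrix n n ℂ} (hX : X.IsHermitian)
    (hρ : ρ.IsHermitian) : star (X * ρ).trace = (X * ρ).trace := by
  rw [← trace_conjTranspose, conjTranspose_mul, hX.eq, hρ.eq, trace_mul_comm]

theorem covForm_one_left [DecidableEq n] {ρ : Matrix n n ℂ} (hρ : ρ.trace = 1)
    (Y : Matrix n n ℂ) : covForm ρ 1 Y = 0 := by
  rw [covForm_apply, one_mul, one_mul, hρ, one_mul, sub_self]

theorem covForm_one_right [DecidableEq n] {ρ : Matrix n n ℂ} (hρ : ρ.trace = 1)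
    (X : Matrix n n ℂ) : covForm ρ X 1 = 0 := by
  rw [covForm_apply, mul_one, one_mul, hρ, mul_one, sub_self]

theorem conjTranspose_mul_mul_mul_conjTranspose_mul_mul [DecidableEq n] {V : Matrix n n ℂ}
    (hV : V * Vᴴ = 1) (X Y : Matrix n n ℂ) : Vᴴ * X * V * (Vᴴ * Y * V) = Vᴴ * (X * Y) * V := by
  rw [← Matrix.mul_assoc, ← Matrix.mul_assoc, Matrix.mul_assoc (Vᴴ * X), hV, Matrix.mul_one,
    Matrix.mul_assoc Vᴴ]

theorem covMat_unitary_conj [DecidableEq n] (M : ι → Matrix n n ℂ) {V : Matrix n n ℂ}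
    (hV : V * Vᴴ = 1) (ρ : Matrix n n ℂ) :
    covMat M (V * ρ * Vᴴ) = covMat (fun i => Vᴴ * M i * V) ρ := by
  have trace_conj (X : Matrix n n ℂ) : (X * (V * ρ * Vᴴ)).trace = (Vᴴ * X * V * ρ).trace := by
    rw [← Matrix.mul_assoc, trace_mul_comm]
    simp only [Matrix.mul_assoc]
  ext i j
  simp only [covMat_apply, covForm_apply, trace_conj,
    conjTranspose_mul_mul_mul_conjTranspose_mul_mul hV]

theorem covMat_posSemidef [Finite ι] {M : ι → Matrix n n ℂ} (hM : ∀ i, (M i).IsHermitian)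
    {ρ : Matrix n n ℂ} (hρ : IsDensity ρ) : (covMat M ρ).PosSemidef := by
  classical
  let N i := M i - (M i * ρ).trace • 1
  have N_isHermitian (i) : (N i)ᴴ = N i := by
    rw [conjTranspose_sub, conjTranspose_smul, conjTranspose_one, (hM i).eq,
      star_trace_mul_of_isHermitian (hM i) hρ.1.isHermitian]
  have trace_N (i) : (N i * ρ).trace = 0 := by
    rw [Matrix.sub_mul, trace_sub, Matrix.smul_mul, Matrix.one_mul, trace_smul, hρ.2, smul_eq_mul,
      mul_one, sub_self]
  have covMat_eq : covMat M ρ = Matrix.of fun i j => ((N i)ᴴ * N j * ρ).trace := by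
    ext i j
    calc covForm ρ (M i) (M j) = covForm ρ (N i) (N j) := by
          simp only [N, map_sub, map_smul, LinearMap.sub_apply, LinearMap.smul_apply,
            covForm_one_left hρ.2, covForm_one_right hρ.2, smul_zero, sub_zero]
      _ = ((N i)ᴴ * N j * ρ).trace := by
          rw [covForm_apply, trace_N, zero_mul, sub_zero, N_isHermitian]
  exact covMat_eq ▸ posSemidef_of_trace_conjTranspose_mul_mul hρ.1 N

end Covariance

section PartialTrace

variable {m n : Type*}

theorem ptrace₁_zero [Fintype m] : ptrace₁ (0 : Matrix (m × n) (m × n) ℂ) = 0 := by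
  ext
  exact Finset.sum_const_zero

theorem ptrace₁_add [Fintype m] (M N : Matrix (m × n) (m × n) ℂ) :
    ptrace₁ (M + N) = ptrace₁ M + ptrace₁ N := by
  ext
  exact Finset.sum_add_distrib

theorem ptrace₁_smul [Fintype m] (c : ℂ) (M : Matrix (m × n) (m × n) ℂ) :
    ptrace₁ (c • M) = c • ptrace₁ M := by
  ext
  exact (Finset.mul_sum ..).symm

theorem ptrace₁_kronecker [Fintype m] (X : Matrix m m ℂ) (Y : Matrix n n ℂ) :
    ptrace₁ (X ⊗ₖ Y) = X.trace • Y := by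
  ext i j
  exact (Finset.sum_mul Finset.univ (fun k => X k k) (Y i j)).symm

theorem ptrace₂_zero [Fintype n] : ptrace₂ (0 : Matrix (m × n) (m × n) ℂ) = 0 := by
  ext
  exact Finset.sum_const_zero

theorem ptrace₂_add [Fintype n] (M N : Matrix (m × n) (m × n) ℂ) :
    ptrace₂ (M + N) = ptrace₂ M + ptrace₂ N := by
  ext
  exact Finset.sum_add_distrib

theorem ptrace₂_smul [Fintype n] (c : ℂ) (M : Matrix (m × n) (m × n) ℂ) :
    ptrace₂ (c • M) = c • ptrace₂ M := by
  ext
  exact (Finset.mul_sum ..).symm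

theorem ptrace₂_kronecker [Fintype n] (X : Matrix m m ℂ) (Y : Matrix n n ℂ) :
    ptrace₂ (X ⊗ₖ Y) = Y.trace • X := by
  ext i j
  exact (Finset.mul_sum Finset.univ (fun k => Y k k) (X i j)).symm.trans (mul_comm _ _)

variable [Fintype m] [Fintype n]

theorem trace_ptrace₁ (M : Matrix (m × n) (m × n) ℂ) : (ptrace₁ M).trace = M.trace :=
  (Fintype.sum_prod_type_right fun p => M p p).symm

theorem trace_ptrace₂ (M : Matrix (m × n) (m × n) ℂ) : (ptrace₂ M).trace = M.trace :=
  (Fintype.sum_prod_type fun p => M p p).symm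

theorem IsDensity.ptrace₁ {ρ : Matrix (m × n) (m × n) ℂ} (hρ : IsDensity ρ) :
    IsDensity (ptrace₁ ρ) := by
  refine ⟨?_, (trace_ptrace₁ ρ).trans hρ.2⟩
  have ptrace₁_eq : _root_.ptrace₁ ρ = ∑ k, ρ.submatrix (Prod.mk k) (Prod.mk k) := by
    ext i j
    rw [Matrix.sum_apply]
    rfl
  exact ptrace₁_eq ▸ posSemidef_sum _ fun k _ => hρ.1.submatrix _

theorem IsDensity.ptrace₂ {ρ : Matrix (m × n) (m × n) ℂ} (hρ : IsDensity ρ) :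
    IsDensity (ptrace₂ ρ) := by
  refine ⟨?_, (trace_ptrace₂ ρ).trans hρ.2⟩
  have ptrace₂_eq : _root_.ptrace₂ ρ = ∑ k, ρ.submatrix (·, k) (·, k) := by
    ext i j
    rw [Matrix.sum_apply]
    rfl
  exact ptrace₂_eq ▸ posSemidef_sum _ fun k _ => hρ.1.submatrix _

theorem IsDensity.kronecker {σ : Matrix m m ℂ} {τ : Matrix n n ℂ} (hσ : IsDensity σ)
    (hτ : IsDensity τ) : IsDensity (σ ⊗ₖ τ) :=
  ⟨hσ.1.kronecker hτ.1, by rw [trace_kronecker, hσ.2, hτ.2, one_mul]⟩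

theorem trace_kronecker_one_mul [DecidableEq n] (X : Matrix m m ℂ) (ρ : Matrix (m × n) (m × n) ℂ) :
    (X ⊗ₖ (1 : Matrix n n ℂ) * ρ).trace = (X * ptrace₂ ρ).trace := by
  induction ρ using kronecker_induction with
  | zero => rw [ptrace₂_zero, Matrix.mul_zero, Matrix.mul_zero, trace_zero, trace_zero]
  | add ρ ρ' h h' => simp only [ptrace₂_add, Matrix.mul_add, trace_add, h, h']
  | kronecker S T =>
    rw [← mul_kronecker_mul, Matrix.one_mul, trace_kronecker, ptrace₂_kronecker,
      Matrix.mul_smul, trace_smul, smul_eq_mul, mul_comm]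

theorem trace_one_kronecker_mul [DecidableEq m] (Y : Matrix n n ℂ) (ρ : Matrix (m × n) (m × n) ℂ) :
    ((1 : Matrix m m ℂ) ⊗ₖ Y * ρ).trace = (Y * ptrace₁ ρ).trace := by
  induction ρ using kronecker_induction with
  | zero => rw [ptrace₁_zero, Matrix.mul_zero, Matrix.mul_zero, trace_zero, trace_zero]
  | add ρ ρ' h h' => simp only [ptrace₁_add, Matrix.mul_add, trace_add, h, h']
  | kronecker S T =>
    rw [← mul_kronecker_mul, Matrix.one_mul, trace_kronecker, ptrace₁_kronecker,
      Matrix.mul_smul, trace_smul, smul_eq_mul]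

theorem covForm_kronecker_one [DecidableEq n] (ρ : Matrix (m × n) (m × n) ℂ)
    (X X' : Matrix m m ℂ) :
    covForm ρ (X ⊗ₖ 1) (X' ⊗ₖ 1) = covForm (ptrace₂ ρ) X X' := by
  simp only [covForm_apply, ← mul_kronecker_mul, Matrix.one_mul, trace_kronecker_one_mul]

theorem covForm_one_kronecker [DecidableEq m] (ρ : Matrix (m × n) (m × n) ℂ)
    (Y Y' : Matrix n n ℂ) :
    covForm ρ (1 ⊗ₖ Y) (1 ⊗ₖ Y') = covForm (ptrace₁ ρ) Y Y' := by
  simp only [covForm_apply, ← mul_kronecker_mul, Matrix.one_mul, trace_one_kronecker_mul]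

end PartialTrace

section ReducedObservables

variable {m n : Type*} [Fintype m] [Fintype n]

/-- The reduced observable on the first factor, `tr₂ (M (1 ⊗ τ))`: the conditional expectation of
`M` in a product state `σ ⊗ τ` with the first factor kept. -/
def redFst [DecidableEq m] (τ : Matrix n n ℂ) : Matrix (m × n) (m × n) ℂ →ₗ[ℂ] Matrix m m ℂ where
  toFun M := ptrace₂ (M * ((1 : Matrix m m ℂ) ⊗ₖ τ))
  map_add' M N := by rw [Matrix.add_mul, ptrace₂_add]
  map_smul' c M := by rw [Matrix.smul_mul, ptrace₂_smul, RingHom.id_apply]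

/-- The reduced observable on the second factor, `tr₁ (M (σ ⊗ 1))`: the conditional expectation of
`M` in a product state `σ ⊗ τ` with the second factor kept. -/
def redSnd [DecidableEq n] (σ : Matrix m m ℂ) : Matrix (m × n) (m × n) ℂ →ₗ[ℂ] Matrix n n ℂ where
  toFun M := ptrace₁ (M * (σ ⊗ₖ (1 : Matrix n n ℂ)))
  map_add' M N := by rw [Matrix.add_mul, ptrace₁_add]
  map_smul' c M := by rw [Matrix.smul_mul, ptrace₁_smul, RingHom.id_apply]

theorem redFst_kronecker [DecidableEq m] (τ : Matrix n n ℂ) (X : Matrix m m ℂ) (Y : Matrix n n ℂ) :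
    redFst τ (X ⊗ₖ Y) = (Y * τ).trace • X := by
  change ptrace₂ _ = _
  rw [← mul_kronecker_mul, Matrix.mul_one, ptrace₂_kronecker]

theorem redSnd_kronecker [DecidableEq n] (σ : Matrix m m ℂ) (X : Matrix m m ℂ) (Y : Matrix n n ℂ) :
    redSnd σ (X ⊗ₖ Y) = (X * σ).trace • Y := by
  change ptrace₁ _ = _
  rw [← mul_kronecker_mul, Matrix.mul_one, ptrace₁_kronecker]

theorem redFst_conjTranspose [DecidableEq m] {τ : Matrix n n ℂ} (hτ : τ.IsHermitian)
    (M : Matrix (m × n) (m × n) ℂ) : redFst τ Mᴴ = (redFst τ M)ᴴ := by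
  induction M using kronecker_induction with
  | zero => simp only [conjTranspose_zero, map_zero]
  | add M N hM hN => simp only [conjTranspose_add, map_add, hM, hN]
  | kronecker X Y =>
    rw [conjTranspose_kronecker, redFst_kronecker, redFst_kronecker, conjTranspose_smul,
      ← trace_conjTranspose, conjTranspose_mul, hτ.eq, trace_mul_comm]

theorem redSnd_conjTranspose [DecidableEq n] {σ : Matrix m m ℂ} (hσ : σ.IsHermitian)
    (M : Matrix (m × n) (m × n) ℂ) : redSnd σ Mᴴ = (redSnd σ M)ᴴ := by
  induction M using kronecker_induction with
  | zero => simp only [conjTranspose_zero, map_zero]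
  | add M N hM hN => simp only [conjTranspose_add, map_add, hM, hN]
  | kronecker X Y =>
    rw [conjTranspose_kronecker, redSnd_kronecker, redSnd_kronecker, conjTranspose_smul,
      ← trace_conjTranspose, conjTranspose_mul, hσ.eq, trace_mul_comm]

theorem redFst_isHermitian [DecidableEq m] {τ : Matrix n n ℂ} (hτ : τ.IsHermitian)
    {M : Matrix (m × n) (m × n) ℂ} (hM : M.IsHermitian) : (redFst τ M).IsHermitian := by
  rw [IsHermitian, ← redFst_conjTranspose hτ, hM.eq]

theorem redSnd_isHermitian [DecidableEq n] {σ : Matrix m m ℂ} (hσ : σ.IsHermitian)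
    {M : Matrix (m × n) (m × n) ℂ} (hM : M.IsHermitian) : (redSnd σ M).IsHermitian := by
  rw [IsHermitian, ← redSnd_conjTranspose hσ, hM.eq]

variable [DecidableEq m] [DecidableEq n]

section ProductState

variable {σ : Matrix m m ℂ} {τ : Matrix n n ℂ}

theorem covForm_kronecker_one_left (hτ : τ.trace = 1) (X : Matrix m m ℂ)
    (M : Matrix (m × n) (m × n) ℂ) :
    covForm (σ ⊗ₖ τ) (X ⊗ₖ 1) M = covForm σ X (redFst τ M) := by
  induction M using kronecker_induction with
  | zero => simp only [map_zero]
  | add M N hM hN => simp only [map_add, hM, hN]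
  | kronecker Z W =>
    simp only [redFst_kronecker, map_smul, smul_eq_mul, covForm_apply, ← mul_kronecker_mul,
      trace_kronecker, Matrix.one_mul, hτ]
    ring

theorem covForm_kronecker_one_right (hτ : τ.trace = 1) (M : Matrix (m × n) (m × n) ℂ)
    (X : Matrix m m ℂ) :
    covForm (σ ⊗ₖ τ) M (X ⊗ₖ 1) = covForm σ (redFst τ M) X := by
  induction M using kronecker_induction with
  | zero => simp only [map_zero, LinearMap.zero_apply]
  | add M N hM hN => simp only [map_add, LinearMap.add_apply, hM, hN]
  | kronecker Z W =>
    simp only [redFst_kronecker, map_smul, LinearMap.smul_apply, smul_eq_mul, covForm_apply,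
      ← mul_kronecker_mul, trace_kronecker, Matrix.one_mul, Matrix.mul_one, hτ]
    ring

theorem covForm_one_kronecker_left (hσ : σ.trace = 1) (Y : Matrix n n ℂ)
    (M : Matrix (m × n) (m × n) ℂ) :
    covForm (σ ⊗ₖ τ) (1 ⊗ₖ Y) M = covForm τ Y (redSnd σ M) := by
  induction M using kronecker_induction with
  | zero => simp only [map_zero]
  | add M N hM hN => simp only [map_add, hM, hN]
  | kronecker Z W =>
    simp only [redSnd_kronecker, map_smul, smul_eq_mul, covForm_apply, ← mul_kronecker_mul,
      trace_kronecker, Matrix.one_mul, hσ]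
    ring

theorem covForm_one_kronecker_right (hσ : σ.trace = 1) (M : Matrix (m × n) (m × n) ℂ)
    (Y : Matrix n n ℂ) :
    covForm (σ ⊗ₖ τ) M (1 ⊗ₖ Y) = covForm τ (redSnd σ M) Y := by
  induction M using kronecker_induction with
  | zero => simp only [map_zero, LinearMap.zero_apply]
  | add M N hM hN => simp only [map_add, LinearMap.add_apply, hM, hN]
  | kronecker Z W =>
    simp only [redSnd_kronecker, map_smul, LinearMap.smul_apply, smul_eq_mul, covForm_apply,
      ← mul_kronecker_mul, trace_kronecker, Matrix.one_mul, Matrix.mul_one, hσ]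
    ring

end ProductState

/-- The interaction part of `M` in the Hoeffding decomposition with respect to `σ ⊗ τ`: what is
left of `M` once its two reduced observables are subtracted. The mean is not restored, as
covariances do not see it. -/
def interactionPart (σ : Matrix m m ℂ) (τ : Matrix n n ℂ) (M : Matrix (m × n) (m × n) ℂ) :
    Matrix (m × n) (m × n) ℂ :=
  M - redFst τ M ⊗ₖ 1 - 1 ⊗ₖ redSnd σ M

theorem interactionPart_isHermitian {σ : Matrix m m ℂ} {τ : Matrix n n ℂ} (hσ : σ.IsHermitian)
    (hτ : τ.IsHermitian) {M : Matrix (m × n) (m × n) ℂ} (hM : M.IsHermitian) :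
    (interactionPart σ τ M).IsHermitian :=
  (hM.sub (isHermitian_kronecker (redFst_isHermitian hτ hM) isHermitian_one)).sub
    (isHermitian_kronecker isHermitian_one (redSnd_isHermitian hσ hM))

theorem covForm_kronecker_eq_add_add {σ : Matrix m m ℂ} {τ : Matrix n n ℂ} (hσ : σ.trace = 1)
    (hτ : τ.trace = 1) (M N : Matrix (m × n) (m × n) ℂ) :
    covForm (σ ⊗ₖ τ) M N =
      covForm σ (redFst τ M) (redFst τ N) + covForm τ (redSnd σ M) (redSnd σ N) +
        covForm (σ ⊗ₖ τ) (interactionPart σ τ M) (interactionPart σ τ N) := by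
  have redFst_self (X : Matrix m m ℂ) : redFst τ (X ⊗ₖ (1 : Matrix n n ℂ)) = X := by
    rw [redFst_kronecker, Matrix.one_mul, hτ, one_smul]
  have redSnd_self (Y : Matrix n n ℂ) : redSnd σ ((1 : Matrix m m ℂ) ⊗ₖ Y) = Y := by
    rw [redSnd_kronecker, Matrix.one_mul, hσ, one_smul]
  simp only [interactionPart, map_sub, LinearMap.sub_apply, covForm_kronecker_one_left hτ,
    covForm_kronecker_one_right hτ, covForm_one_kronecker_left hσ, covForm_one_kronecker_right hσ,
    redFst_self, redSnd_self, redFst_kronecker, map_smul, LinearMap.smul_apply,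
    covForm_one_left hσ, covForm_one_right hσ, smul_zero]
  ring

theorem covMat_interactionPart_posSemidef {ι : Type*} [Finite ι] {σ : Matrix m m ℂ}
    {τ : Matrix n n ℂ} (hσ : IsDensity σ) (hτ : IsDensity τ) {M : ι → Matrix (m × n) (m × n) ℂ}
    (hM : ∀ i, (M i).IsHermitian) :
    (covMat (fun i => interactionPart σ τ (M i)) (σ ⊗ₖ τ)).PosSemidef :=
  covMat_posSemidef
    (fun i => interactionPart_isHermitian hσ.1.isHermitian hτ.1.isHermitian (hM i))
    (hσ.kronecker hτ)

end ReducedObservables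

section Embeddings

variable {n r p : Type*} [Fintype n] [Fintype r] [Fintype p]

theorem commute_submatrix_equiv {R : Type*} [NonUnitalNonAssocSemiring R] {M N : Matrix n n R}
    (h : Commute M N) (e : p ≃ n) :
    Commute (M.submatrix e e) (N.submatrix e e) := by
  rw [Commute, SemiconjBy, submatrix_mul_equiv, submatrix_mul_equiv, h.eq]

variable [DecidableEq n] [DecidableEq r] [DecidableEq p]

/-- The amplification `M ↦ M ⊗ 1` of operators on a subsystem with index type `n`, where `e`
splits the index type `p` of the whole system into the subsystem and the rest. -/
def ampliate (e : p ≃ n × r) : Matrix n n ℂ →⋆ₐ[ℂ] Matrix p p ℂ where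
  toFun M := (M ⊗ₖ (1 : Matrix r r ℂ)).submatrix e e
  map_one' := by rw [one_kronecker_one, submatrix_one_equiv]
  map_mul' M N := by rw [submatrix_mul_equiv, ← mul_kronecker_mul, Matrix.one_mul]
  map_zero' := by rw [zero_kronecker, submatrix_zero]; rfl
  map_add' M N := by rw [add_kronecker, submatrix_add]; rfl
  commutes' c := by
    rw [Algebra.algebraMap_eq_smul_one, Algebra.algebraMap_eq_smul_one, smul_kronecker,
      one_kronecker_one, submatrix_smul, Pi.smul_apply, Pi.smul_apply, submatrix_one_equiv]
  map_star' M := by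
    rw [star_eq_conjTranspose, star_eq_conjTranspose, conjTranspose_submatrix,
      conjTranspose_kronecker, conjTranspose_one]

variable {d : ℕ}

/-- The splitting of the six factors into Alice's pair `A₁A₂` and the rest. -/
def aliceEquiv (d : ℕ) : TriIdx d ≃ D2 d × (Fin d × Fin d × D2 d) where
  toFun p := ((p.1.2, p.2.1.1), (p.1.1, p.2.1.2, p.2.2))
  invFun q := ((q.2.1, q.1.1), ((q.1.2, q.2.2.1), q.2.2.2))

/-- The cyclic symmetry of the triangle, which carries Bob to Alice, Charlie to Bob and Alice to
Charlie. -/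
def rotate (d : ℕ) : TriIdx d ≃ TriIdx d where
  toFun p := (p.2.1, (p.2.2, p.1))
  invFun p := (p.2.2, (p.1, p.2.1))

theorem embedA_eq_ampliate (M : Matrix (D2 d) (D2 d) ℂ) :
    embedA M = ampliate (aliceEquiv d) M := by
  ext p q
  simp [embedA, ampliate, aliceEquiv, one_apply]

theorem embedB_eq_submatrix (M : Matrix (D2 d) (D2 d) ℂ) :
    embedB M = (embedA M).submatrix (rotate d) (rotate d) := by
  ext p q
  simp [embedA, embedB, rotate, and_comm, and_assoc]

theorem embedC_eq_submatrix (M : Matrix (D2 d) (D2 d) ℂ) :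
    embedC M = (embedB M).submatrix (rotate d) (rotate d) := by
  ext p q
  simp [embedB, embedC, rotate, and_comm, and_left_comm, and_assoc]

theorem embedA_eq_submatrix (M : Matrix (D2 d) (D2 d) ℂ) :
    embedA M = (embedC M).submatrix (rotate d) (rotate d) := by
  ext p q
  simp [embedA, embedC, rotate, and_comm, and_left_comm]

theorem embedB_eq_ampliate (M : Matrix (D2 d) (D2 d) ℂ) :
    embedB M = ampliate ((rotate d).trans (aliceEquiv d)) M := by
  rw [embedB_eq_submatrix, embedA_eq_ampliate]
  rfl

theorem embedC_eq_ampliate (M : Matrix (D2 d) (D2 d) ℂ) :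
    embedC M = ampliate ((rotate d).trans ((rotate d).trans (aliceEquiv d))) M := by
  rw [embedC_eq_submatrix, embedB_eq_ampliate]
  rfl

theorem btnState_eq_submatrix (ρa ρb ρc : Matrix (D2 d) (D2 d) ℂ) :
    btnState ρa ρb ρc = (btnState ρb ρc ρa).submatrix (rotate d) (rotate d) := by
  ext p q
  simp only [btnState, submatrix_apply, kroneckerMap_apply, rotate, Equiv.coe_fn_mk]
  ring

theorem embedA_kronecker (X Y : Matrix (Fin d) (Fin d) ℂ) :
    embedA (X ⊗ₖ Y) = (1 ⊗ₖ X) ⊗ₖ ((Y ⊗ₖ 1) ⊗ₖ (1 : Matrix (D2 d) (D2 d) ℂ)) := by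
  ext p q
  by_cases h : p.1.1 = q.1.1 <;> by_cases h' : p.2.1.2 = q.2.1.2 <;>
    by_cases h'' : p.2.2 = q.2.2 <;> simp [embedA, one_apply, h, h', h'']

theorem embedB_kronecker (X Y : Matrix (Fin d) (Fin d) ℂ) :
    embedB (X ⊗ₖ Y) = (1 : Matrix (D2 d) (D2 d) ℂ) ⊗ₖ ((1 ⊗ₖ X) ⊗ₖ (Y ⊗ₖ 1)) := by
  ext p q
  by_cases h : p.1 = q.1 <;> by_cases h' : p.2.1.1 = q.2.1.1 <;>
    by_cases h'' : p.2.2.2 = q.2.2.2 <;> simp [embedB, one_apply, h, h', h'']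

theorem commute_embedA_embedB (M N : Matrix (D2 d) (D2 d) ℂ) :
    Commute (embedA M) (embedB N) := by
  induction M, N using kronecker_induction₂ with
  | zero_left N => rw [embedA_eq_ampliate, map_zero]; exact .zero_left _
  | zero_right M => rw [embedB_eq_ampliate, map_zero]; exact .zero_right _
  | add_left M M' N h h' =>
    rw [embedA_eq_ampliate] at h h' ⊢
    rw [map_add]; exact h.add_left h'
  | add_right M N N' h h' =>
    rw [embedB_eq_ampliate] at h h' ⊢
    rw [map_add]; exact h.add_right h'
  | kronecker X Y Z W =>
    rw [embedA_kronecker, embedB_kronecker, Commute, SemiconjBy]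
    simp only [← mul_kronecker_mul, Matrix.one_mul, Matrix.mul_one]

theorem commute_embedB_embedC (M N : Matrix (D2 d) (D2 d) ℂ) :
    Commute (embedB M) (embedC N) := by
  rw [embedB_eq_submatrix, embedC_eq_submatrix]
  exact commute_submatrix_equiv (commute_embedA_embedB M N) _

theorem commute_embedC_embedA (M N : Matrix (D2 d) (D2 d) ℂ) :
    Commute (embedC M) (embedA N) := by
  rw [embedC_eq_submatrix, embedA_eq_submatrix]
  exact commute_submatrix_equiv (commute_embedB_embedC M N) _

end Embeddings

section TriangleCovariance

variable {d : ℕ} {ρa ρb ρc : Matrix (D2 d) (D2 d) ℂ}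

theorem trace_embedA_mul_btnState (hρa : ρa.trace = 1) (M : Matrix (D2 d) (D2 d) ℂ) :
    (embedA M * btnState ρa ρb ρc).trace = (M * (margA1 ρb ⊗ₖ margA2 ρc)).trace := by
  induction M using kronecker_induction with
  | zero => rw [embedA_eq_ampliate, map_zero, Matrix.zero_mul, Matrix.zero_mul, trace_zero,
      trace_zero]
  | add M N hM hN =>
    rw [embedA_eq_ampliate] at hM hN ⊢
    simp only [map_add, Matrix.add_mul, trace_add, hM, hN]
  | kronecker X Y =>
    simp only [embedA_kronecker, btnState, ← mul_kronecker_mul, trace_kronecker, Matrix.one_mul,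
      trace_kronecker_one_mul, trace_one_kronecker_mul, hρa, mul_one, margA1, margA2]

theorem covForm_embedA_embedA (hρa : ρa.trace = 1) (hρb : ρb.trace = 1) (hρc : ρc.trace = 1)
    (M N : Matrix (D2 d) (D2 d) ℂ) :
    covForm (btnState ρa ρb ρc) (embedA M) (embedA N) =
      covForm ρc (redA2 ρb M ⊗ₖ 1) (redA2 ρb N ⊗ₖ 1) +
        covForm ρb (1 ⊗ₖ redA1 ρc M) (1 ⊗ₖ redA1 ρc N) +
          covForm (margA1 ρb ⊗ₖ margA2 ρc) (interactionPart (margA1 ρb) (margA2 ρc) M)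
            (interactionPart (margA1 ρb) (margA2 ρc) N) := by
  have trace_margA1 : (margA1 ρb).trace = 1 := (trace_ptrace₁ ρb).trans hρb
  have trace_margA2 : (margA2 ρc).trace = 1 := (trace_ptrace₂ ρc).trans hρc
  have embedA_mul : embedA M * embedA N = embedA (M * N) := by
    simp only [embedA_eq_ampliate, map_mul]
  calc covForm (btnState ρa ρb ρc) (embedA M) (embedA N)
      = covForm (margA1 ρb ⊗ₖ margA2 ρc) M N := by
        simp only [covForm_apply, embedA_mul, trace_embedA_mul_btnState hρa]
    _ = _ := by
        rw [covForm_kronecker_eq_add_add trace_margA1 trace_margA2, covForm_kronecker_one,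
          covForm_one_kronecker, add_comm (covForm (margA1 ρb) _ _)]
        rfl

theorem covForm_embedB_embedB (hρa : ρa.trace = 1) (hρb : ρb.trace = 1) (hρc : ρc.trace = 1)
    (M N : Matrix (D2 d) (D2 d) ℂ) :
    covForm (btnState ρa ρb ρc) (embedB M) (embedB N) =
      covForm ρa (redB2 ρc M ⊗ₖ 1) (redB2 ρc N ⊗ₖ 1) +
        covForm ρc (1 ⊗ₖ redB1 ρa M) (1 ⊗ₖ redB1 ρa N) +
          covForm (margB1 ρc ⊗ₖ margB2 ρa) (interactionPart (margB1 ρc) (margB2 ρa) M)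
            (interactionPart (margB1 ρc) (margB2 ρa) N) := by
  rw [btnState_eq_submatrix, embedB_eq_submatrix, embedB_eq_submatrix, covForm_submatrix]
  exact covForm_embedA_embedA hρb hρc hρa M N

theorem covForm_embedC_embedC (hρa : ρa.trace = 1) (hρb : ρb.trace = 1) (hρc : ρc.trace = 1)
    (M N : Matrix (D2 d) (D2 d) ℂ) :
    covForm (btnState ρa ρb ρc) (embedC M) (embedC N) =
      covForm ρb (redC2 ρa M ⊗ₖ 1) (redC2 ρa N ⊗ₖ 1) +
        covForm ρa (1 ⊗ₖ redC1 ρb M) (1 ⊗ₖ redC1 ρb N) +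
          covForm (margC1 ρa ⊗ₖ margC2 ρb) (interactionPart (margC1 ρa) (margC2 ρb) M)
            (interactionPart (margC1 ρa) (margC2 ρb) N) := by
  rw [btnState_eq_submatrix, embedC_eq_submatrix, embedC_eq_submatrix, covForm_submatrix]
  exact covForm_embedB_embedB hρb hρc hρa M N

theorem covForm_embedA_embedB (hρa : ρa.trace = 1) (hρb : ρb.trace = 1)
    (M N : Matrix (D2 d) (D2 d) ℂ) :
    covForm (btnState ρa ρb ρc) (embedA M) (embedB N) =
      covForm ρc (redA2 ρb M ⊗ₖ 1) (1 ⊗ₖ redB1 ρa N) := by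
  change _ = covForm ρc (redSnd (margA1 ρb) M ⊗ₖ 1) (1 ⊗ₖ redFst (margB2 ρa) N)
  rw [embedA_eq_ampliate, embedB_eq_ampliate]
  induction M, N using kronecker_induction₂ with
  | zero_left N => simp only [map_zero, zero_kronecker, LinearMap.zero_apply]
  | zero_right M => simp only [map_zero, kronecker_zero]
  | add_left M M' N h h' => simp only [map_add, add_kronecker, LinearMap.add_apply, h, h']
  | add_right M N N' h h' => simp only [map_add, kronecker_add, h, h']
  | kronecker X Y Z W =>
    rw [← embedA_eq_ampliate, ← embedB_eq_ampliate]
    simp only [embedA_kronecker, embedB_kronecker, btnState, redFst_kronecker, redSnd_kronecker,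
      smul_kronecker, kronecker_smul, map_smul, LinearMap.smul_apply, smul_eq_mul, covForm_apply,
      ← mul_kronecker_mul, trace_kronecker, Matrix.one_mul, Matrix.mul_one,
      trace_kronecker_one_mul, trace_one_kronecker_mul, hρa, hρb, margA1, margB2]
    ring

theorem covForm_embedB_embedC (hρb : ρb.trace = 1) (hρc : ρc.trace = 1)
    (M N : Matrix (D2 d) (D2 d) ℂ) :
    covForm (btnState ρa ρb ρc) (embedB M) (embedC N) =
      covForm ρa (redB2 ρc M ⊗ₖ 1) (1 ⊗ₖ redC1 ρb N) := by
  rw [btnState_eq_submatrix, embedB_eq_submatrix, embedC_eq_submatrix, covForm_submatrix]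
  exact covForm_embedA_embedB hρb hρc M N

theorem covForm_embedC_embedA (hρc : ρc.trace = 1) (hρa : ρa.trace = 1)
    (M N : Matrix (D2 d) (D2 d) ℂ) :
    covForm (btnState ρa ρb ρc) (embedC M) (embedA N) =
      covForm ρb (redC2 ρa M ⊗ₖ 1) (1 ⊗ₖ redA1 ρc N) := by
  rw [btnState_eq_submatrix, embedC_eq_submatrix, embedA_eq_submatrix, covForm_submatrix]
  exact covForm_embedB_embedC hρc hρa M N

theorem covForm_embedB_embedA (hρa : ρa.trace = 1) (hρb : ρb.trace = 1)
    (N M : Matrix (D2 d) (D2 d) ℂ) :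
    covForm (btnState ρa ρb ρc) (embedB N) (embedA M) =
      covForm ρc (1 ⊗ₖ redB1 ρa N) (redA2 ρb M ⊗ₖ 1) := by
  rw [covForm_comm_of_commute (commute_embedA_embedB M N).symm, covForm_embedA_embedB hρa hρb,
    covForm_comm_of_commute (commute_kronecker_one_one_kronecker _ _)]

theorem covForm_embedC_embedB (hρb : ρb.trace = 1) (hρc : ρc.trace = 1)
    (N M : Matrix (D2 d) (D2 d) ℂ) :
    covForm (btnState ρa ρb ρc) (embedC N) (embedB M) =
      covForm ρa (1 ⊗ₖ redC1 ρb N) (redB2 ρc M ⊗ₖ 1) := by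
  rw [btnState_eq_submatrix, embedB_eq_submatrix, embedC_eq_submatrix, covForm_submatrix]
  exact covForm_embedB_embedA hρb hρc N M

theorem covForm_embedA_embedC (hρc : ρc.trace = 1) (hρa : ρa.trace = 1)
    (N M : Matrix (D2 d) (D2 d) ℂ) :
    covForm (btnState ρa ρb ρc) (embedA N) (embedC M) =
      covForm ρb (1 ⊗ₖ redA1 ρc N) (redC2 ρa M ⊗ₖ 1) := by
  rw [btnState_eq_submatrix, embedC_eq_submatrix, embedA_eq_submatrix, covForm_submatrix]
  exact covForm_embedC_embedB hρc hρa N M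

end TriangleCovariance

section Decomposition

variable {d : ℕ} {ι κ μ : Type*} (ρa ρb ρc : Matrix (D2 d) (D2 d) ℂ)
  (A : ι → Matrix (D2 d) (D2 d) ℂ) (B : κ → Matrix (D2 d) (D2 d) ℂ)
  (C : μ → Matrix (D2 d) (D2 d) ℂ)

/-- The observables of the three parties, as one family on the six factors. -/
def localObservables : ι ⊕ (κ ⊕ μ) → Matrix (TriIdx d) (TriIdx d) ℂ :=
  Sum.elim (fun i => embedA (A i)) (Sum.elim (fun j => embedB (B j)) (fun k => embedC (C k)))

/-- The reduced observables on the source `ρ_c`, zero in Charlie's sector; their covariance matrix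
in `ρ_c` is `T_c`. -/
def reducedOnSourceC : ι ⊕ (κ ⊕ μ) → Matrix (D2 d) (D2 d) ℂ :=
  Sum.elim (fun i => redA2 ρb (A i) ⊗ₖ (1 : Matrix (Fin d) (Fin d) ℂ))
    (Sum.elim (fun j => (1 : Matrix (Fin d) (Fin d) ℂ) ⊗ₖ redB1 ρa (B j))
      (fun _ => (0 : Matrix (D2 d) (D2 d) ℂ)))

/-- The reduced observables on the source `ρ_b`, zero in Bob's sector; their covariance matrix in
`ρ_b` is `T_b`. -/
def reducedOnSourceB : ι ⊕ (κ ⊕ μ) → Matrix (D2 d) (D2 d) ℂ :=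
  Sum.elim (fun i => (1 : Matrix (Fin d) (Fin d) ℂ) ⊗ₖ redA1 ρc (A i))
    (Sum.elim (fun _ => (0 : Matrix (D2 d) (D2 d) ℂ))
      (fun k => redC2 ρa (C k) ⊗ₖ (1 : Matrix (Fin d) (Fin d) ℂ)))

/-- The reduced observables on the source `ρ_a`, zero in Alice's sector; their covariance matrix in
`ρ_a` is `T_a`. -/
def reducedOnSourceA : ι ⊕ (κ ⊕ μ) → Matrix (D2 d) (D2 d) ℂ :=
  Sum.elim (fun _ => (0 : Matrix (D2 d) (D2 d) ℂ))
    (Sum.elim (fun j => redB2 ρc (B j) ⊗ₖ (1 : Matrix (Fin d) (Fin d) ℂ))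
      (fun k => (1 : Matrix (Fin d) (Fin d) ℂ) ⊗ₖ redC1 ρb (C k)))

/-- The block-diagonal matrix `R`, made of the covariances of each party's interaction parts. -/
def residualCov : Matrix (ι ⊕ (κ ⊕ μ)) (ι ⊕ (κ ⊕ μ)) ℂ :=
  fromBlocks
    (covMat (fun i => interactionPart (margA1 ρb) (margA2 ρc) (A i)) (margA1 ρb ⊗ₖ margA2 ρc)) 0 0
    (fromBlocks
      (covMat (fun j => interactionPart (margB1 ρc) (margB2 ρa) (B j)) (margB1 ρc ⊗ₖ margB2 ρa))
      0 0
      (covMat (fun k => interactionPart (margC1 ρa) (margC2 ρb) (C k)) (margC1 ρa ⊗ₖ margC2 ρb)))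

variable {ρa ρb ρc A B C}

theorem covMat_localObservables_btnState (hρa : ρa.trace = 1) (hρb : ρb.trace = 1)
    (hρc : ρc.trace = 1) :
    covMat (localObservables A B C) (btnState ρa ρb ρc) =
      covMat (reducedOnSourceC ρa ρb A B) ρc + covMat (reducedOnSourceB ρa ρc A C) ρb +
        covMat (reducedOnSourceA ρb ρc B C) ρa + residualCov ρa ρb ρc A B C := by
  ext (i | j | k) (i' | j' | k') <;>
    simp only [Matrix.add_apply, covMat_apply, localObservables, reducedOnSourceC,
      reducedOnSourceB, reducedOnSourceA, residualCov, fromBlocks_apply₁₁, fromBlocks_apply₁₂,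
      fromBlocks_apply₂₁, fromBlocks_apply₂₂, Sum.elim_inl, Sum.elim_inr, map_zero,
      LinearMap.zero_apply, Matrix.zero_apply, add_zero, zero_add]
  case inl.inl => exact covForm_embedA_embedA hρa hρb hρc _ _
  case inl.inr.inl => exact covForm_embedA_embedB hρa hρb _ _
  case inl.inr.inr => exact covForm_embedA_embedC hρc hρa _ _
  case inr.inl.inl => exact covForm_embedB_embedA hρa hρb _ _
  case inr.inl.inr.inl =>
    rw [add_comm (covForm ρc _ _)]
    exact covForm_embedB_embedB hρa hρb hρc _ _
  case inr.inl.inr.inr => exact covForm_embedB_embedC hρb hρc _ _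
  case inr.inr.inl => exact covForm_embedC_embedA hρc hρa _ _
  case inr.inr.inr.inl => exact covForm_embedC_embedB hρb hρc _ _
  case inr.inr.inr.inr => exact covForm_embedC_embedC hρa hρb hρc _ _

variable [Finite ι] [Finite κ] [Finite μ]

theorem covMat_reducedOnSourceC_posSemidef (hρa : IsDensity ρa) (hρb : IsDensity ρb)
    (hρc : IsDensity ρc) (hA : ∀ i, (A i).IsHermitian) (hB : ∀ j, (B j).IsHermitian) :
    (covMat (reducedOnSourceC ρa ρb A B : ι ⊕ (κ ⊕ μ) → _) ρc).PosSemidef := by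
  refine covMat_posSemidef ?_ hρc
  rintro (i | j | _)
  · exact isHermitian_kronecker (redSnd_isHermitian hρb.ptrace₁.1.isHermitian (hA i))
      isHermitian_one
  · exact isHermitian_kronecker isHermitian_one
      (redFst_isHermitian hρa.ptrace₂.1.isHermitian (hB j))
  · exact isHermitian_zero

theorem covMat_reducedOnSourceB_posSemidef (hρa : IsDensity ρa) (hρb : IsDensity ρb)
    (hρc : IsDensity ρc) (hA : ∀ i, (A i).IsHermitian) (hC : ∀ k, (C k).IsHermitian) :
    (covMat (reducedOnSourceB ρa ρc A C : ι ⊕ (κ ⊕ μ) → _) ρb).PosSemidef := by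
  refine covMat_posSemidef ?_ hρb
  rintro (i | _ | k)
  · exact isHermitian_kronecker isHermitian_one
      (redFst_isHermitian hρc.ptrace₂.1.isHermitian (hA i))
  · exact isHermitian_zero
  · exact isHermitian_kronecker (redSnd_isHermitian hρa.ptrace₁.1.isHermitian (hC k))
      isHermitian_one

theorem covMat_reducedOnSourceA_posSemidef (hρa : IsDensity ρa) (hρb : IsDensity ρb)
    (hρc : IsDensity ρc) (hB : ∀ j, (B j).IsHermitian) (hC : ∀ k, (C k).IsHermitian) :
    (covMat (reducedOnSourceA ρb ρc B C : ι ⊕ (κ ⊕ μ) → _) ρa).PosSemidef := by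
  refine covMat_posSemidef ?_ hρa
  rintro (_ | j | k)
  · exact isHermitian_zero
  · exact isHermitian_kronecker (redSnd_isHermitian hρc.ptrace₁.1.isHermitian (hB j))
      isHermitian_one
  · exact isHermitian_kronecker isHermitian_one
      (redFst_isHermitian hρb.ptrace₂.1.isHermitian (hC k))

theorem residualCov_posSemidef (hρa : IsDensity ρa) (hρb : IsDensity ρb) (hρc : IsDensity ρc)
    (hA : ∀ i, (A i).IsHermitian) (hB : ∀ j, (B j).IsHermitian) (hC : ∀ k, (C k).IsHermitian) :
    (residualCov ρa ρb ρc A B C).PosSemidef :=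
  posSemidef_fromBlocks_zero (covMat_interactionPart_posSemidef hρb.ptrace₁ hρc.ptrace₂ hA)
    (posSemidef_fromBlocks_zero (covMat_interactionPart_posSemidef hρc.ptrace₁ hρa.ptrace₂ hB)
      (covMat_interactionPart_posSemidef hρa.ptrace₁ hρb.ptrace₂ hC))

end Decomposition

section OrthogonalObservables

variable {n ι : Type*} [Fintype n]

/-- A complete orthogonal set of observables: Hermitian matrices indexed by as many labels as the
operator space has dimensions, with `tr (A i * A j)` equal to the dimension of the system if
`i = j` and to zero otherwise. -/
structure IsCompleteOrthogonal [Fintype ι] [DecidableEq ι] (A : ι → Matrix n n ℂ) : Prop where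
  isHermitian : ∀ i, (A i).IsHermitian
  trace_mul : ∀ i j, (A i * A j).trace = if i = j then (Fintype.card n : ℂ) else 0
  card_eq : Fintype.card ι = Fintype.card n ^ 2

namespace IsCompleteOrthogonal

variable [Fintype ι] [DecidableEq ι] {A : ι → Matrix n n ℂ}

theorem trace_mul_sum_smul (hA : IsCompleteOrthogonal A) (k : ι) (a : ι → ℂ) :
    (A k * ∑ i, a i • A i).trace = a k * Fintype.card n := by
  simp only [Matrix.mul_sum, trace_sum, Matrix.mul_smul, trace_smul, hA.trace_mul, smul_eq_mul,
    mul_ite, mul_zero, Finset.sum_ite_eq, Finset.mem_univ, if_true]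

theorem linearIndependent [Nonempty n] (hA : IsCompleteOrthogonal A) : LinearIndependent ℂ A := by
  refine Fintype.linearIndependent_iff.mpr fun a ha k => ?_
  have key := hA.trace_mul_sum_smul k a
  rw [ha, Matrix.mul_zero, trace_zero] at key
  exact (mul_eq_zero.mp key.symm).resolve_right (Nat.cast_ne_zero.mpr Fintype.card_ne_zero)

theorem eq_sum_smul [Nonempty n] (hA : IsCompleteOrthogonal A) (X : Matrix n n ℂ) :
    X = ∑ k, ((A k * X).trace / Fintype.card n) • A k := by
  have span_eq_top : Submodule.span ℂ (Set.range A) = ⊤ :=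
    hA.linearIndependent.span_eq_top_of_card_eq_finrank' <| by
      rw [Module.finrank_matrix, Module.finrank_self, mul_one, hA.card_eq, pow_two]
  obtain ⟨a, rfl⟩ :=
    (Submodule.mem_span_range_iff_exists_fun ℂ).mp (span_eq_top ▸ Submodule.mem_top (x := X))
  have card_ne_zero : (Fintype.card n : ℂ) ≠ 0 := Nat.cast_ne_zero.mpr Fintype.card_ne_zero
  simp only [hA.trace_mul_sum_smul, mul_div_cancel_right₀ _ card_ne_zero]

theorem exists_real_orthogonal [Nonempty n] {B : ι → Matrix n n ℂ} (hA : IsCompleteOrthogonal A)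
    (hB : IsCompleteOrthogonal B) :
    ∃ O : Matrix ι ι ℝ, Oᵀ * O = 1 ∧ ∀ i, B i = ∑ k, (O k i : ℂ) • A k := by
  have card_ne_zero : (Fintype.card n : ℂ) ≠ 0 := Nat.cast_ne_zero.mpr Fintype.card_ne_zero
  let O : Matrix ι ι ℝ := of fun k i => (A k * B i).trace.re / Fintype.card n
  have trace_eq (k i) : (A k * B i).trace = O k i * Fintype.card n := by
    have real : (((A k * B i).trace.re : ℝ) : ℂ) = (A k * B i).trace :=
      Complex.conj_eq_iff_re.mp
        (star_trace_mul_of_isHermitian (hA.isHermitian k) (hB.isHermitian i))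
    simp only [O, of_apply, Complex.ofReal_div, real, Complex.ofReal_natCast,
      div_mul_cancel₀ _ card_ne_zero]
  have expansion (i) : B i = ∑ k, (O k i : ℂ) • A k := by
    conv_lhs => rw [hA.eq_sum_smul (B i)]
    simp only [trace_eq, mul_div_cancel_right₀ _ card_ne_zero]
  refine ⟨O, ?_, expansion⟩
  ext i j
  have trace_expand : (∑ k, (O k i : ℂ) * O k j) * Fintype.card n = (B i * B j).trace := by
    conv_rhs => rw [expansion i]
    simp only [Finset.sum_mul, trace_sum, Matrix.smul_mul, trace_smul, trace_eq, smul_eq_mul,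
      mul_assoc]
  apply Complex.ofReal_injective
  apply mul_right_cancel₀ card_ne_zero
  rw [mul_apply, Complex.ofReal_sum]
  simp only [transpose_apply, Complex.ofReal_mul, trace_expand, hB.trace_mul, one_apply]
  split_ifs <;> simp

theorem unitary_conj [DecidableEq n] (hA : IsCompleteOrthogonal A) {U : Matrix n n ℂ}
    (hU : U ∈ unitaryGroup n ℂ) : IsCompleteOrthogonal fun i => Uᴴ * A i * U where
  isHermitian i := isHermitian_conjTranspose_mul_mul U (hA.isHermitian i)
  trace_mul i j := by
    have hU' : U * Uᴴ = 1 := mem_unitaryGroup_iff.mp hU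
    rw [conjTranspose_mul_mul_mul_conjTranspose_mul_mul hU', trace_mul_cycle, hU',
      Matrix.one_mul, hA.trace_mul]
  card_eq := hA.card_eq

theorem exists_unitary_conj_eq_sum_smul [Nonempty n] [DecidableEq n] (hA : IsCompleteOrthogonal A)
    {U : Matrix n n ℂ} (hU : U ∈ unitaryGroup n ℂ) :
    ∃ O : Matrix ι ι ℝ, Oᵀ * O = 1 ∧ ∀ i, Uᴴ * A i * U = ∑ k, (O k i : ℂ) • A k :=
  hA.exists_real_orthogonal (hA.unitary_conj hU)

end IsCompleteOrthogonal

end OrthogonalObservables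

section LocalUnitaries

theorem star_mul_mul_cancel_of_commute {R : Type*} [Monoid R] [Star R] {u x : R}
    (hu : star u * u = 1) (h : Commute x u) : star u * x * u = x := by
  rw [mul_assoc, h.eq, ← mul_assoc, hu, one_mul]

variable {d : ℕ} {ι κ μ ι' κ' μ' : Type*} {UA UB UC : Matrix (D2 d) (D2 d) ℂ}

/-- The product `U_A ⊗ U_B ⊗ U_C` of operators of the three parties, on the six factors. -/
def localProduct (UA UB UC : Matrix (D2 d) (D2 d) ℂ) : Matrix (TriIdx d) (TriIdx d) ℂ :=
  embedA UA * embedB UB * embedC UC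

theorem embedA_mem_unitaryGroup (hUA : UA ∈ unitaryGroup (D2 d) ℂ) :
    embedA UA ∈ unitaryGroup (TriIdx d) ℂ :=
  embedA_eq_ampliate UA ▸ Unitary.map_mem _ hUA

theorem embedB_mem_unitaryGroup (hUB : UB ∈ unitaryGroup (D2 d) ℂ) :
    embedB UB ∈ unitaryGroup (TriIdx d) ℂ :=
  embedB_eq_ampliate UB ▸ Unitary.map_mem _ hUB

theorem embedC_mem_unitaryGroup (hUC : UC ∈ unitaryGroup (D2 d) ℂ) :
    embedC UC ∈ unitaryGroup (TriIdx d) ℂ :=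
  embedC_eq_ampliate UC ▸ Unitary.map_mem _ hUC

theorem embedA_conj (U M : Matrix (D2 d) (D2 d) ℂ) :
    (embedA U)ᴴ * embedA M * embedA U = embedA (Uᴴ * M * U) := by
  simp only [embedA_eq_ampliate, ← star_eq_conjTranspose, map_mul, map_star]

theorem embedB_conj (U M : Matrix (D2 d) (D2 d) ℂ) :
    (embedB U)ᴴ * embedB M * embedB U = embedB (Uᴴ * M * U) := by
  simp only [embedB_eq_ampliate, ← star_eq_conjTranspose, map_mul, map_star]

theorem embedC_conj (U M : Matrix (D2 d) (D2 d) ℂ) :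
    (embedC U)ᴴ * embedC M * embedC U = embedC (Uᴴ * M * U) := by
  simp only [embedC_eq_ampliate, ← star_eq_conjTranspose, map_mul, map_star]

theorem localProduct_conj_localObservables (hUA : UA ∈ unitaryGroup (D2 d) ℂ)
    (hUB : UB ∈ unitaryGroup (D2 d) ℂ) (hUC : UC ∈ unitaryGroup (D2 d) ℂ)
    (A : ι → Matrix (D2 d) (D2 d) ℂ) (B : κ → Matrix (D2 d) (D2 d) ℂ)
    (C : μ → Matrix (D2 d) (D2 d) ℂ) (x : ι ⊕ (κ ⊕ μ)) :
    (localProduct UA UB UC)ᴴ * localObservables A B C x * localProduct UA UB UC =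
      localObservables (fun i => UAᴴ * A i * UA) (fun j => UBᴴ * B j * UB)
        (fun k => UCᴴ * C k * UC) x := by
  have conj_A {X} (h : Commute X (embedA UA)) : (embedA UA)ᴴ * X * embedA UA = X :=
    star_mul_mul_cancel_of_commute (mem_unitaryGroup_iff'.mp (embedA_mem_unitaryGroup hUA)) h
  have conj_B {X} (h : Commute X (embedB UB)) : (embedB UB)ᴴ * X * embedB UB = X :=
    star_mul_mul_cancel_of_commute (mem_unitaryGroup_iff'.mp (embedB_mem_unitaryGroup hUB)) h
  have conj_C {X} (h : Commute X (embedC UC)) : (embedC UC)ᴴ * X * embedC UC = X :=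
    star_mul_mul_cancel_of_commute (mem_unitaryGroup_iff'.mp (embedC_mem_unitaryGroup hUC)) h
  have conj_eq (X) : (localProduct UA UB UC)ᴴ * X * localProduct UA UB UC =
      (embedC UC)ᴴ * ((embedB UB)ᴴ * ((embedA UA)ᴴ * X * embedA UA) * embedB UB) * embedC UC := by
    simp only [localProduct, conjTranspose_mul, Matrix.mul_assoc]
  rw [conj_eq]
  rcases x with i | j | k
  · change (embedC UC)ᴴ * ((embedB UB)ᴴ * ((embedA UA)ᴴ * embedA (A i) * embedA UA) * embedB UB) *
      embedC UC = embedA (UAᴴ * A i * UA)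
    rw [embedA_conj, conj_B (commute_embedA_embedB _ _), conj_C (commute_embedC_embedA _ _).symm]
  · change (embedC UC)ᴴ * ((embedB UB)ᴴ * ((embedA UA)ᴴ * embedB (B j) * embedA UA) * embedB UB) *
      embedC UC = embedB (UBᴴ * B j * UB)
    rw [conj_A (commute_embedA_embedB _ _).symm, embedB_conj, conj_C (commute_embedB_embedC _ _)]
  · change (embedC UC)ᴴ * ((embedB UB)ᴴ * ((embedA UA)ᴴ * embedC (C k) * embedA UA) * embedB UB) *
      embedC UC = embedC (UCᴴ * C k * UC)
    rw [conj_A (commute_embedC_embedA _ _), conj_B (commute_embedB_embedC _ _).symm, embedC_conj]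

theorem localObservables_sum_smul [Fintype ι] [Fintype κ] [Fintype μ]
    (A : ι → Matrix (D2 d) (D2 d) ℂ) (B : κ → Matrix (D2 d) (D2 d) ℂ)
    (C : μ → Matrix (D2 d) (D2 d) ℂ) (P : Matrix ι ι' ℂ) (Q : Matrix κ κ' ℂ) (R : Matrix μ μ' ℂ)
    (x : ι' ⊕ (κ' ⊕ μ')) :
    localObservables (fun i => ∑ k, P k i • A k) (fun j => ∑ k, Q k j • B k)
        (fun l => ∑ k, R k l • C k) x =
      ∑ y, fromBlocks P 0 0 (fromBlocks Q 0 0 R) y x • localObservables A B C y := by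
  rcases x with i | j | k <;>
    simp [localObservables, embedA_eq_ampliate, embedB_eq_ampliate, embedC_eq_ampliate]

theorem covMat_localObservables_unitary_conj [Fintype ι] [Fintype κ] [Fintype μ]
    {A : ι → Matrix (D2 d) (D2 d) ℂ} {B : κ → Matrix (D2 d) (D2 d) ℂ}
    {C : μ → Matrix (D2 d) (D2 d) ℂ} (hUA : UA ∈ unitaryGroup (D2 d) ℂ)
    (hUB : UB ∈ unitaryGroup (D2 d) ℂ) (hUC : UC ∈ unitaryGroup (D2 d) ℂ)
    {P : Matrix ι ι ℂ} {Q : Matrix κ κ ℂ} {R : Matrix μ μ ℂ}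
    (hA : ∀ i, UAᴴ * A i * UA = ∑ k, P k i • A k) (hB : ∀ j, UBᴴ * B j * UB = ∑ k, Q k j • B k)
    (hC : ∀ l, UCᴴ * C l * UC = ∑ k, R k l • C k) (ρ : Matrix (TriIdx d) (TriIdx d) ℂ) :
    covMat (localObservables A B C) (localProduct UA UB UC * ρ * (localProduct UA UB UC)ᴴ) =
      (fromBlocks P 0 0 (fromBlocks Q 0 0 R))ᵀ * covMat (localObservables A B C) ρ *
        fromBlocks P 0 0 (fromBlocks Q 0 0 R) := by
  have localProduct_mem : localProduct UA UB UC ∈ unitaryGroup (TriIdx d) ℂ :=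
    mul_mem (mul_mem (embedA_mem_unitaryGroup hUA) (embedB_mem_unitaryGroup hUB))
      (embedC_mem_unitaryGroup hUC)
  rw [covMat_unitary_conj _ (mem_unitaryGroup_iff.mp localProduct_mem), ← covMat_sum_smul]
  simp only [localProduct_conj_localObservables hUA hUB hUC, hA, hB, hC,
    localObservables_sum_smul]

end LocalUnitaries

theorem isCompleteOrthogonal_of_trace_eq_sq {d : ℕ} {A : Fin (d ^ 4) → Matrix (D2 d) (D2 d) ℂ}
    (herm : ∀ i, (A i).IsHermitian)
    (orth : ∀ i j, (A i * A j).trace = if i = j then (d : ℂ) ^ 2 else 0) :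
    IsCompleteOrthogonal A where
  isHermitian := herm
  trace_mul i j := by simp [orth, sq]
  card_eq := by simp only [Fintype.card_prod, Fintype.card_fin]; ring

/-- For a triangle network state with local unitaries
`ρ_UTN = (U_A ⊗ U_B ⊗ U_C) ρ_BTN (U_A ⊗ U_B ⊗ U_C)†` and complete orthogonal
sets of local observables, there are real orthogonal matrices `O_A, O_B, O_C`
such that, with `O = O_A ⊕ O_B ⊕ O_C`,
`Γ(ρ_UTN) = Oᵀ Γ(ρ_BTN) O = Oᵀ (T_c + T_b + T_a + R) O`, where
`T_c, T_b, T_a, R` are the positive semidefinite matrices of the block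
decomposition of `Γ(ρ_BTN)`. -/
theorem stmt8 {d : ℕ} (hd : 1 ≤ d)
    (ρa ρb ρc : Matrix (D2 d) (D2 d) ℂ)
    (hρa : IsDensity ρa) (hρb : IsDensity ρb) (hρc : IsDensity ρc)
    (UA UB UC : Matrix (D2 d) (D2 d) ℂ)
    (hUA : UA ∈ Matrix.unitaryGroup (D2 d) ℂ)
    (hUB : UB ∈ Matrix.unitaryGroup (D2 d) ℂ)
    (hUC : UC ∈ Matrix.unitaryGroup (D2 d) ℂ)
    -- complete orthogonal sets of observables on the parties' d²-dimensional spaces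
    (A B C : Fin (d ^ 4) → Matrix (D2 d) (D2 d) ℂ)
    (hAherm : ∀ i, (A i).IsHermitian)
    (hBherm : ∀ j, (B j).IsHermitian)
    (hCherm : ∀ k, (C k).IsHermitian)
    (hAorth : ∀ i i', (A i * A i').trace = if i = i' then ((d : ℂ) ^ 2) else 0)
    (hBorth : ∀ j j', (B j * B j').trace = if j = j' then ((d : ℂ) ^ 2) else 0)
    (hCorth : ∀ k k', (C k * C k').trace = if k = k' then ((d : ℂ) ^ 2) else 0)
    (ρUTN : Matrix (TriIdx d) (TriIdx d) ℂ)
    (hρUTN : ρUTN = (embedA UA * embedB UB * embedC UC) * btnState ρa ρb ρc *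
      (embedA UA * embedB UB * embedC UC)ᴴ)
    (ΓUTN ΓBTN Tc Tb Ta R :
      Matrix (Fin (d ^ 4) ⊕ (Fin (d ^ 4) ⊕ Fin (d ^ 4)))
        (Fin (d ^ 4) ⊕ (Fin (d ^ 4) ⊕ Fin (d ^ 4))) ℂ)
    (hΓUTN : ΓUTN = covMat
      (Sum.elim (fun i => embedA (A i))
        (Sum.elim (fun j => embedB (B j)) (fun k => embedC (C k)))) ρUTN)
    (hΓBTN : ΓBTN = covMat
      (Sum.elim (fun i => embedA (A i))
        (Sum.elim (fun j => embedB (B j)) (fun k => embedC (C k))))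
      (btnState ρa ρb ρc))
    (hTc : Tc = covMat
      (Sum.elim (fun i => redA2 ρb (A i) ⊗ₖ (1 : Matrix (Fin d) (Fin d) ℂ))
        (Sum.elim (fun j => (1 : Matrix (Fin d) (Fin d) ℂ) ⊗ₖ redB1 ρa (B j))
          (fun _ => (0 : Matrix (D2 d) (D2 d) ℂ)))) ρc)
    (hTb : Tb = covMat
      (Sum.elim (fun i => (1 : Matrix (Fin d) (Fin d) ℂ) ⊗ₖ redA1 ρc (A i))
        (Sum.elim (fun _ => (0 : Matrix (D2 d) (D2 d) ℂ))
          (fun k => redC2 ρa (C k) ⊗ₖ (1 : Matrix (Fin d) (Fin d) ℂ)))) ρb)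
    (hTa : Ta = covMat
      (Sum.elim (fun _ => (0 : Matrix (D2 d) (D2 d) ℂ))
        (Sum.elim (fun j => redB2 ρc (B j) ⊗ₖ (1 : Matrix (Fin d) (Fin d) ℂ))
          (fun k => (1 : Matrix (Fin d) (Fin d) ℂ) ⊗ₖ redC1 ρb (C k)))) ρa)
    (hR : R = ΓBTN - Tc - Tb - Ta) :
    ∃ OA OB OC : Matrix (Fin (d ^ 4)) (Fin (d ^ 4)) ℝ,
      OAᵀ * OA = 1 ∧ OBᵀ * OB = 1 ∧ OCᵀ * OC = 1 ∧
      (∀ O : Matrix (Fin (d ^ 4) ⊕ (Fin (d ^ 4) ⊕ Fin (d ^ 4)))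
          (Fin (d ^ 4) ⊕ (Fin (d ^ 4) ⊕ Fin (d ^ 4))) ℂ,
        O = (Matrix.of fun p q => match p, q with
          | Sum.inl i, Sum.inl j => (OA i j : ℂ)
          | Sum.inr (Sum.inl i), Sum.inr (Sum.inl j) => (OB i j : ℂ)
          | Sum.inr (Sum.inr i), Sum.inr (Sum.inr j) => (OC i j : ℂ)
          | _, _ => 0) →
        ΓUTN = Oᵀ * ΓBTN * O ∧ ΓUTN = Oᵀ * (Tc + Tb + Ta + R) * O) ∧
      Tc.PosSemidef ∧ Tb.PosSemidef ∧ Ta.PosSemidef ∧ R.PosSemidef := by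
  have : NeZero d := ⟨Nat.one_le_iff_ne_zero.mp hd⟩
  obtain ⟨OA, hOA, hconjA⟩ :=
    (isCompleteOrthogonal_of_trace_eq_sq hAherm hAorth).exists_unitary_conj_eq_sum_smul hUA
  obtain ⟨OB, hOB, hconjB⟩ :=
    (isCompleteOrthogonal_of_trace_eq_sq hBherm hBorth).exists_unitary_conj_eq_sum_smul hUB
  obtain ⟨OC, hOC, hconjC⟩ :=
    (isCompleteOrthogonal_of_trace_eq_sq hCherm hCorth).exists_unitary_conj_eq_sum_smul hUC
  have decomposition : ΓBTN = Tc + Tb + Ta + residualCov ρa ρb ρc A B C := by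
    rw [hΓBTN, hTc, hTb, hTa]
    exact covMat_localObservables_btnState hρa.2 hρb.2 hρc.2
  have R_eq : R = residualCov ρa ρb ρc A B C := by rw [hR, decomposition]; abel
  refine ⟨OA, OB, OC, hOA, hOB, hOC, fun O hO => ?_,
    hTc ▸ covMat_reducedOnSourceC_posSemidef hρa hρb hρc hAherm hBherm,
    hTb ▸ covMat_reducedOnSourceB_posSemidef hρa hρb hρc hAherm hCherm,
    hTa ▸ covMat_reducedOnSourceA_posSemidef hρa hρb hρc hBherm hCherm,
    R_eq ▸ residualCov_posSemidef hρa hρb hρc hAherm hBherm hCherm⟩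
  have O_eq : O = fromBlocks (OA.map (↑)) 0 0 (fromBlocks (OB.map (↑)) 0 0 (OC.map (↑))) := by
    rw [hO]; ext (i | i | i) (j | j | j) <;> rfl
  have covariance : ΓUTN = Oᵀ * ΓBTN * O := by
    rw [hΓUTN, hρUTN, hΓBTN, O_eq]
    exact covMat_localObservables_unitary_conj hUA hUB hUC hconjA hconjB hconjC _
  exact ⟨covariance, by rw [R_eq, ← decomposition, covariance]⟩
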